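/- arXiv:1305.5440 — 2 statements merged into one kernel-verified Lean document; each statement's English description precedes it below -/
import Mathlib

section
/- Let r ≥ 1 and ε > 0, let V_1, …, V_r be finite nonempty sets, and let g : V_1 × ⋯ × V_r → ℝ_{≥0} be upper η-regular with η ≤ 2^{−40r/ε²}. Then there exists g̃ : V_1 × ⋯ × V_r → [0,1] of complexity at most 2^{20r/ε²} such that (g, g̃) is an ε-discrepancy pair. -/
/-!
Additive energy increment, dual to approximating `g` by a `[0, 1]`-valued function. Let `Ψ` be the
antiderivative of the truncation `y ↦ max 0 (min 1 y)`. If the truncation of `F` is not an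
`ε`-discrepancy pair with `g`, then a clique set `S` witnesses this, and for the right sign
`F ± ε 1_S` increases the concave objective `E[g F - Ψ(F)]` by at least `ε² / 2`, because `Ψ'` is
`1`-Lipschitz. No averaging over partitions takes place.

The objective cannot grow for long. After `k` steps `|F| ≤ k ε`, and `F` is constant on the cells
of a partition into `2 ^ (k r)` clique sets, so upper regularity gives
`E[(g - 1) F⁺] ≤ 2 ^ (k r) k ε η`; and `y⁺ - Ψ(y) ≤ 1 / 2`. Hence
`k ε² / 2 ≤ 2 ^ (k r) k ε η + 1 / 2`, which fails for `k = ⌈2 / ε²⌉` if `ε < 1`. If `1 ≤ ε`, the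
constant `1` approximates `g`.
-/

open Finset

/-- The average (expectation with respect to the uniform measure) of `f` over `α`. -/
noncomputable def avg {α : Type*} [Fintype α] (f : α → ℝ) : ℝ :=
  (∑ x, f x) / (Fintype.card α)

variable {r : ℕ} {V : Fin r → Type} [∀ j, Fintype (V j)]

/-- The product `∏_{f ∈ ∂e} 1_{B_f}(x_f)` over the faces `f = e ∖ {j}` of
`e = {1, …, r}`. -/
noncomputable def faceProd (B : (j : Fin r) → Set ((i : {i : Fin r // i ≠ j}) → V i.1))
    (x : (j : Fin r) → V j) : ℝ :=
  ∏ j : Fin r,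
    Set.indicator (B j) (fun _ => (1 : ℝ)) (fun i : {i : Fin r // i ≠ j} => x i.1)

/-- `g : V_1 × ⋯ × V_r → ℝ≥0` is upper `η`-regular. -/
noncomputable def UpperRegular (g : ((j : Fin r) → V j) → ℝ) (η : ℝ) : Prop :=
  ∀ B : (j : Fin r) → Set ((i : {i : Fin r // i ≠ j}) → V i.1),
    avg (fun x : (j : Fin r) → V j => (g x - 1) * faceProd B x) ≤ η

/-- `(g, g')` is an `ε`-discrepancy pair. -/
noncomputable def DiscPair (g g' : ((j : Fin r) → V j) → ℝ) (ε : ℝ) : Prop :=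
  ∀ B : (j : Fin r) → Set ((i : {i : Fin r // i ≠ j}) → V i.1),
    |avg (fun x : (j : Fin r) → V j => (g x - g' x) * faceProd B x)| ≤ ε

/-- `S` is the set of `r`-cliques of some `(r-1)`-uniform hypergraph:
`1_S(x) = ∏_{f ∈ ∂e} 1_{B_f}(x_f)` for some sets `B_f ⊆ V_f`. -/
def IsCliqueSet (S : Set ((j : Fin r) → V j)) : Prop :=
  ∃ B : (j : Fin r) → Set ((i : {i : Fin r // i ≠ j}) → V i.1),
    ∀ x, x ∈ S ↔ ∀ j : Fin r, (fun i : {i : Fin r // i ≠ j} => x i.1) ∈ B j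

/-- `f` has complexity at most `T`: there is a partition of `V_1 × ⋯ × V_r` into `T`
(possibly empty) clique sets on each of which `f` is constant. -/
def FComplexityLE (f : ((j : Fin r) → V j) → ℝ) (T : ℕ) : Prop :=
  ∃ P : Fin T → Set ((j : Fin r) → V j),
    (∀ i, IsCliqueSet (P i)) ∧
    (∀ i₁ i₂, i₁ ≠ i₂ → P i₁ ∩ P i₂ = ∅) ∧
    (⋃ i, P i) = Set.univ ∧
    ∀ i, ∀ x ∈ P i, ∀ y ∈ P i, f x = f y

open scoped BigOperators

/-! ### The truncated dual objective -/

/-- The projection of `y` onto `[0, 1]`. -/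
noncomputable def unitClamp (y : ℝ) : ℝ := max 0 (min 1 y)

/-- The antiderivative of `unitClamp` vanishing at `0`. It is written in its dual form, as the value
of `w * y - w ^ 2 / 2` at its maximiser `w = unitClamp y` over `[0, 1]`. -/
noncomputable def clampPotential (y : ℝ) : ℝ := unitClamp y * y - unitClamp y ^ 2 / 2

/-- The concave objective `E[g F - Ψ(F)]` with `Ψ = clampPotential`, whose gradient at `F` is
`g - unitClamp ∘ F`. -/
noncomputable def dualObjective {α : Type*} [Fintype α] (g F : α → ℝ) : ℝ :=
  𝔼 x, (g x * F x - clampPotential (F x))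

lemma unitClamp_mem_Icc (y : ℝ) : unitClamp y ∈ Set.Icc 0 1 :=
  ⟨le_max_left _ _, max_le zero_le_one (min_le_left _ _)⟩

lemma sub_unitClamp_mul_nonpos {w : ℝ} (hw : w ∈ Set.Icc 0 1) (y : ℝ) :
    (w - unitClamp y) * (y - unitClamp y) ≤ 0 := by
  obtain ⟨hw0, hw1⟩ := hw
  rcases le_total 1 y with hy | hy
  · rw [unitClamp, min_eq_left hy, max_eq_right zero_le_one]
    exact mul_nonpos_of_nonpos_of_nonneg (sub_nonpos.2 hw1) (sub_nonneg.2 hy)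
  rcases le_total 0 y with hy' | hy'
  · simp [unitClamp, hy, hy']
  · rw [unitClamp, min_eq_right hy, max_eq_left hy']
    simpa using mul_nonpos_of_nonneg_of_nonpos hw0 hy'

lemma mul_sub_sq_add_sq_le_clampPotential {w : ℝ} (hw : w ∈ Set.Icc 0 1) (y : ℝ) :
    w * y - w ^ 2 / 2 + (w - unitClamp y) ^ 2 / 2 ≤ clampPotential y := by
  have := sub_unitClamp_mul_nonpos hw y
  rw [clampPotential]
  linarith

lemma clampPotential_add_le (y d : ℝ) :
    clampPotential (y + d) ≤ clampPotential y + unitClamp y * d + d ^ 2 / 2 := by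
  have hgrowth := mul_sub_sq_add_sq_le_clampPotential (unitClamp_mem_Icc (y + d)) y
  have hsq := sq_nonneg (unitClamp (y + d) - unitClamp y - d)
  rw [clampPotential]
  linarith

lemma max_zero_sub_clampPotential_le (y : ℝ) : max 0 y - clampPotential y ≤ 1 / 2 := by
  have hzero := mul_sub_sq_add_sq_le_clampPotential (Set.left_mem_Icc.2 zero_le_one) y
  have hone := mul_sub_sq_add_sq_le_clampPotential (Set.right_mem_Icc.2 zero_le_one) y
  rcases max_cases 0 y with ⟨hmax, -⟩ | ⟨hmax, -⟩ <;> rw [hmax] <;>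
    linarith [sq_nonneg (0 - unitClamp y), sq_nonneg (1 - unitClamp y)]

section DualObjective

variable {α : Type*} [Fintype α]

lemma dualObjective_zero (g : α → ℝ) : dualObjective g (fun _ => 0) = 0 := by
  simp [dualObjective, clampPotential, unitClamp]

variable [Nonempty α] {g : α → ℝ}

lemma le_dualObjective_add (g F : α → ℝ) {h : α → ℝ} {ε : ℝ} (hh : ∀ x, |h x| ≤ ε) :
    dualObjective g F + 𝔼 x, (g x - unitClamp (F x)) * h x - ε ^ 2 / 2
      ≤ dualObjective g (fun x => h x + F x) := by
  rw [dualObjective, ← expect_add_distrib, ← Fintype.expect_const (ι := α) (ε ^ 2 / 2),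
    ← expect_sub_distrib]
  refine expect_le_expect fun x _ => ?_
  have hpotential := clampPotential_add_le (F x) (h x)
  have hsq : h x ^ 2 ≤ ε ^ 2 := sq_le_sq.2 ((hh x).trans (le_abs_self ε))
  rw [add_comm] at hpotential
  linarith

lemma dualObjective_le (hg : ∀ x, 0 ≤ g x) (F : α → ℝ) :
    dualObjective g F ≤ 𝔼 x, (g x - 1) * max 0 (F x) + 1 / 2 := by
  rw [← Fintype.expect_const (ι := α) (1 / 2 : ℝ), ← expect_add_distrib]
  refine expect_le_expect fun x _ => ?_
  have hpotential := max_zero_sub_clampPotential_le (F x)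
  have hmul := mul_le_mul_of_nonneg_left (le_max_right 0 (F x)) (hg x)
  linarith

end DualObjective

/-! ### Clique sets and the partitions they generate -/

lemma avg_eq_expect {α : Type*} [Fintype α] (f : α → ℝ) : avg f = 𝔼 x, f x :=
  (Fintype.expect_eq_sum_div_card f).symm

/-- Systems of face sets `B_f ⊆ V_f`, `f ∈ ∂e`, the face `f = e ∖ {j}` being indexed by `j`. -/
abbrev FaceSets (V : Fin r → Type) : Type :=
  (j : Fin r) → Set ((i : {i : Fin r // i ≠ j}) → V i.1)

/-- The set of pairs `(i, j)` such that the projection of `x` onto the face `e ∖ {j}` lies in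
`B i j`. Its fibres are the cells of the partition generated by all the `B i`. -/
def facePattern {ι : Type*} (B : ι → FaceSets V) (x : (j : Fin r) → V j) : Set (ι × Fin r) :=
  {p | (fun i : {i : Fin r // i ≠ p.2} => x i.1) ∈ B p.1 p.2}

/-- The weighted sum of clique indicators `∑ i, c i • 1_{S i}`, with `S i` the clique set of
`B i`. -/
noncomputable def cliqueSum {ι : Type*} [Fintype ι] (c : ι → ℝ) (B : ι → FaceSets V)
    (x : (j : Fin r) → V j) : ℝ :=
  ∑ i, c i * faceProd (B i) x

section Cliques

variable {V : Fin r → Type} {ι κ : Type*}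

lemma faceProd_eq_indicator (B : FaceSets V) :
    faceProd B = Set.indicator
      {x | ∀ j : Fin r, (fun i : {i : Fin r // i ≠ j} => x i.1) ∈ B j} 1 := by
  classical
  ext x
  simp [faceProd, Set.indicator_apply, prod_ite_zero]

lemma IsCliqueSet.exists_faceProd_eq {S : Set ((j : Fin r) → V j)} (hS : IsCliqueSet S) :
    ∃ B : FaceSets V, faceProd B = S.indicator 1 := by
  obtain ⟨B, hB⟩ := hS
  have hS_eq : S = {x | ∀ j : Fin r, (fun i : {i : Fin r // i ≠ j} => x i.1) ∈ B j} := Set.ext hB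
  exact ⟨B, by rw [hS_eq, faceProd_eq_indicator]⟩

lemma faceProd_mem_Icc (B : FaceSets V) (x : (j : Fin r) → V j) :
    faceProd B x ∈ Set.Icc 0 1 := by
  rw [faceProd_eq_indicator]
  exact ⟨Set.indicator_nonneg (fun _ _ => zero_le_one) x,
    Set.indicator_le_self' (fun _ _ => zero_le_one) x⟩

lemma abs_mul_faceProd_le (a : ℝ) (B : FaceSets V) (x : (j : Fin r) → V j) :
    |a * faceProd B x| ≤ |a| := by
  obtain ⟨h0, h1⟩ := faceProd_mem_Icc B x
  rw [abs_mul, abs_of_nonneg h0]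
  exact mul_le_of_le_one_right (abs_nonneg a) h1

lemma isCliqueSet_facePattern_fiber (B : ι → FaceSets V) (p : Set (ι × Fin r)) :
    IsCliqueSet (facePattern B ⁻¹' {p}) := by
  refine ⟨fun j => {y | ∀ i, y ∈ B i j ↔ (i, j) ∈ p}, fun x => ?_⟩
  simp only [facePattern, Set.mem_preimage, Set.mem_singleton_iff, Set.ext_iff, Prod.forall,
    Set.mem_ofPred_eq]
  exact forall_comm

lemma fComplexityLE_const (a : ℝ) : FComplexityLE (fun _ : (j : Fin r) → V j => a) 1 :=
  ⟨fun _ => Set.univ, fun _ => ⟨fun _ => Set.univ, by simp⟩,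
    fun i₁ i₂ h => (h (Subsingleton.elim i₁ i₂)).elim, Set.iUnion_const _, fun _ _ _ _ _ => rfl⟩

lemma fComplexityLE_of_factorsThrough [Fintype κ] {π : ((j : Fin r) → V j) → κ}
    (hπ : ∀ p, IsCliqueSet (π ⁻¹' {p})) {f : ((j : Fin r) → V j) → ℝ}
    (hf : f.FactorsThrough π) : FComplexityLE f (Fintype.card κ) := by
  let e := Fintype.equivFin κ
  refine ⟨fun i => π ⁻¹' {e.symm i}, fun i => hπ _, fun i₁ i₂ hne => ?_, ?_, ?_⟩
  · rw [← Set.preimage_inter, Set.singleton_inter_eq_empty.2 (by simpa using hne),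
      Set.preimage_empty]
  · exact Set.eq_univ_of_forall fun x => Set.mem_iUnion.2 ⟨e (π x), by simp⟩
  · exact fun i x hx y hy => hf (hx.trans hy.symm)

lemma cliqueSum_cons {k : ℕ} (a : ℝ) (c : Fin k → ℝ) (C : FaceSets V) (B : Fin k → FaceSets V)
    (x : (j : Fin r) → V j) :
    cliqueSum (Fin.cons a c : Fin (k + 1) → ℝ) (Fin.cons C B : Fin (k + 1) → FaceSets V) x
      = a * faceProd C x + cliqueSum c B x := by
  simp only [cliqueSum, Fin.sum_univ_succ, Fin.cons_zero, Fin.cons_succ]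

variable [Fintype ι] (c : ι → ℝ) (B : ι → FaceSets V)

lemma cliqueSum_factorsThrough_facePattern : (cliqueSum c B).FactorsThrough (facePattern B) := by
  intro x y hxy
  have hmem (i : ι) (j : Fin r) : (fun l : {l : Fin r // l ≠ j} => x l.1) ∈ B i j ↔
      (fun l : {l : Fin r // l ≠ j} => y l.1) ∈ B i j := Set.ext_iff.1 hxy (i, j)
  classical
  simp only [cliqueSum, faceProd_eq_indicator, Set.indicator_apply, Set.mem_ofPred_eq, hmem,
    Pi.one_apply]

lemma fComplexityLE_comp_cliqueSum (φ : ℝ → ℝ) :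
    FComplexityLE (fun x => φ (cliqueSum c B x)) (2 ^ (Fintype.card ι * r)) := by
  classical
  have hcard : Fintype.card (Set (ι × Fin r)) = 2 ^ (Fintype.card ι * r) := by simp
  rw [← hcard]
  exact fComplexityLE_of_factorsThrough (isCliqueSet_facePattern_fiber B)
    fun _ _ h => congrArg φ (cliqueSum_factorsThrough_facePattern c B h)

variable {c}

lemma abs_cliqueSum_le {M : ℝ} (hc : ∀ i, |c i| ≤ M) (x : (j : Fin r) → V j) :
    |cliqueSum c B x| ≤ Fintype.card ι * M :=
  calc |cliqueSum c B x| ≤ ∑ i, |c i * faceProd (B i) x| := abs_sum_le_sum_abs _ _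
    _ ≤ ∑ _i : ι, M := sum_le_sum fun i _ => (abs_mul_faceProd_le (c i) (B i) x).trans (hc i)
    _ = Fintype.card ι * M := by simp

end Cliques

/-! ### Upper regularity -/

section UpperRegular

variable {ι κ : Type*} {g : ((j : Fin r) → V j) → ℝ} {η : ℝ}

lemma UpperRegular.mono {η' : ℝ} (hreg : UpperRegular g η) (h : η ≤ η') : UpperRegular g η' :=
  fun B => (hreg B).trans h

lemma UpperRegular.expect_indicator_le (hreg : UpperRegular g η) {S : Set ((j : Fin r) → V j)}
    (hS : IsCliqueSet S) : 𝔼 x, (g x - 1) * S.indicator 1 x ≤ η := by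
  obtain ⟨B, hB⟩ := hS.exists_faceProd_eq
  rw [← hB, ← avg_eq_expect]
  exact hreg B

lemma UpperRegular.expect_mul_le (hreg : UpperRegular g η) (hη : 0 ≤ η) [Fintype κ]
    {π : ((j : Fin r) → V j) → κ} (hπ : ∀ p, IsCliqueSet (π ⁻¹' {p}))
    {f : ((j : Fin r) → V j) → ℝ} (hf : f.FactorsThrough π) {M : ℝ} (hM : 0 ≤ M)
    (hfM : ∀ x, f x ∈ Set.Icc 0 M) :
    𝔼 x, (g x - 1) * f x ≤ Fintype.card κ * (M * η) := by
  classical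
  obtain ⟨φ, hφ, hφf⟩ : ∃ φ : κ → ℝ, (∀ p, φ p ∈ Set.Icc 0 M) ∧ ∀ x, φ (π x) = f x := by
    refine ⟨Function.extend π f 0, fun p => ?_, hf.extend_apply 0⟩
    by_cases hp : ∃ x, π x = p
    · obtain ⟨x, rfl⟩ := hp
      rw [hf.extend_apply]
      exact hfM x
    · rw [Function.extend_apply' _ _ _ hp]
      exact ⟨le_rfl, hM⟩
  calc 𝔼 x, (g x - 1) * f x
      = 𝔼 x, ∑ p, φ p * ((g x - 1) * (π ⁻¹' {p}).indicator 1 x) := by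
        refine expect_congr rfl fun x _ => ?_
        simp [Set.indicator_apply, hφf, mul_comm]
    _ = ∑ p, φ p * 𝔼 x, (g x - 1) * (π ⁻¹' {p}).indicator 1 x := by
        simp only [expect_sum_comm, mul_expect]
    _ ≤ ∑ _p : κ, M * η := by
        refine sum_le_sum fun p _ => ?_
        exact (mul_le_mul_of_nonneg_left (hreg.expect_indicator_le (hπ p)) (hφ p).1).trans
          (mul_le_mul_of_nonneg_right (hφ p).2 hη)
    _ = Fintype.card κ * (M * η) := by simp

variable [∀ j, Nonempty (V j)]

lemma UpperRegular.dualObjective_cliqueSum_le (hreg : UpperRegular g η) (hg : ∀ x, 0 ≤ g x)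
    (hη : 0 ≤ η) [Fintype ι] {c : ι → ℝ} {ε : ℝ} (hε : 0 ≤ ε) (hc : ∀ i, |c i| ≤ ε)
    (B : ι → FaceSets V) :
    dualObjective g (cliqueSum c B)
      ≤ 2 ^ (Fintype.card ι * r) * (Fintype.card ι * ε * η) + 1 / 2 := by
  classical
  have hposPart : 𝔼 x, (g x - 1) * max 0 (cliqueSum c B x)
      ≤ Fintype.card (Set (ι × Fin r)) * (Fintype.card ι * ε * η) := by
    refine hreg.expect_mul_le hη (isCliqueSet_facePattern_fiber B)
      (fun _ _ h => congrArg (max 0) (cliqueSum_factorsThrough_facePattern c B h))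
      (by positivity) fun x => ⟨le_max_left _ _, max_le (by positivity) ?_⟩
    exact (le_abs_self _).trans (abs_cliqueSum_le B hc x)
  have hcard : (Fintype.card (Set (ι × Fin r)) : ℝ) = 2 ^ (Fintype.card ι * r) := by simp
  rw [hcard] at hposPart
  linarith [dualObjective_le hg (cliqueSum c B)]

lemma UpperRegular.discPair_one (hreg : UpperRegular g η) (hg : ∀ x, 0 ≤ g x) :
    DiscPair g (fun _ => 1) (max 1 η) := by
  refine fun B => abs_le.2 ⟨?_, (hreg B).trans (le_max_right 1 η)⟩
  refine (neg_le_neg (le_max_left 1 η)).trans ?_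
  rw [avg_eq_expect]
  refine le_expect univ_nonempty fun x _ => ?_
  obtain ⟨h0, h1⟩ := faceProd_mem_Icc B x
  linarith [mul_nonneg (hg x) h0]

end UpperRegular

/-! ### The increment -/

section Increment

variable {ε : ℝ}

lemma exists_sq_le_expect_of_not_discPair {g g' : ((j : Fin r) → V j) → ℝ} (hε : 0 ≤ ε)
    (h : ¬ DiscPair g g' ε) :
    ∃ (a : ℝ) (C : FaceSets V), |a| ≤ ε ∧
      ε ^ 2 ≤ 𝔼 x, (g x - g' x) * (a * faceProd C x) := by
  simp only [DiscPair, not_forall, not_le] at h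
  obtain ⟨C, hC⟩ := h
  have hscale (a : ℝ) : 𝔼 x, (g x - g' x) * (a * faceProd C x)
      = a * avg fun x => (g x - g' x) * faceProd C x := by
    simp only [avg_eq_expect, mul_expect, mul_left_comm]
  rcases lt_abs.1 hC with hpos | hneg
  · refine ⟨ε, C, (abs_of_nonneg hε).le, ?_⟩
    rw [hscale, sq]
    exact mul_le_mul_of_nonneg_left hpos.le hε
  · refine ⟨-ε, C, by rw [abs_neg, abs_of_nonneg hε], ?_⟩
    rw [hscale, sq, neg_mul_comm]
    exact mul_le_mul_of_nonneg_left hneg.le hε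

variable [∀ j, Nonempty (V j)]

lemma exists_discPair_or_le_dualObjective (g : ((j : Fin r) → V j) → ℝ) (hε : 0 ≤ ε) (k : ℕ) :
    (∃ l < k, ∃ (c : Fin l → ℝ) (B : Fin l → FaceSets V),
      DiscPair g (fun x => unitClamp (cliqueSum c B x)) ε) ∨
    ∃ (c : Fin k → ℝ) (B : Fin k → FaceSets V), (∀ i, |c i| ≤ ε) ∧
      k * (ε ^ 2 / 2) ≤ dualObjective g (cliqueSum c B) := by
  induction k with
  | zero =>
    refine .inr ⟨Fin.elim0, Fin.elim0, fun i => i.elim0, ?_⟩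
    have hempty : cliqueSum (Fin.elim0 : Fin 0 → ℝ) (Fin.elim0 : Fin 0 → FaceSets V)
        = fun _ => 0 := funext fun _ => Fin.sum_univ_zero _
    rw [hempty, dualObjective_zero, Nat.cast_zero, zero_mul]
  | succ k ih =>
    obtain ⟨l, hl, hdisc⟩ | ⟨c, B, hc, hobj⟩ := ih
    · exact .inl ⟨l, hl.trans k.lt_succ_self, hdisc⟩
    by_cases hdisc : DiscPair g (fun x => unitClamp (cliqueSum c B x)) ε
    · exact .inl ⟨k, k.lt_succ_self, c, B, hdisc⟩
    obtain ⟨a, C, ha, hcorr⟩ := exists_sq_le_expect_of_not_discPair hε hdisc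
    refine .inr ⟨Fin.cons a c, Fin.cons C B, Fin.forall_fin_succ.2 ⟨ha, hc⟩, ?_⟩
    have hincr := le_dualObjective_add g (cliqueSum c B)
      fun x => (abs_mul_faceProd_le a C x).trans ha
    rw [funext (cliqueSum_cons a c C B)]
    push_cast
    linarith

end Increment

/-! ### The number of steps -/

lemma two_pow_mul_two_rpow_lt {r k : ℕ} (hr : 1 ≤ r) {ε : ℝ} (hε : 0 < ε) (hε1 : ε < 1)
    (hk : (k : ℝ) ≤ 3 / ε ^ 2) :
    (2 : ℝ) ^ (k * r) * (2 : ℝ) ^ (-(40 * (r : ℝ)) / ε ^ 2) < ε / 4 := by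
  have hr' : (1 : ℝ) ≤ r := by exact_mod_cast hr
  have hexponent : (k * r : ℝ) + -(40 * (r : ℝ)) / ε ^ 2 ≤ -(4 / ε ^ 2) :=
    calc (k * r : ℝ) + -(40 * (r : ℝ)) / ε ^ 2
        ≤ 3 / ε ^ 2 * r + -(40 * (r : ℝ)) / ε ^ 2 := by gcongr
      _ = -(37 / ε ^ 2 * r) := by ring
      _ ≤ -(4 / ε ^ 2 * 1) := by gcongr; norm_num
      _ = -(4 / ε ^ 2) := by rw [mul_one]
  have hbernoulli : 4 / ε ^ 2 < (2 : ℝ) ^ (4 / ε ^ 2) := by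
    have hone : 1 ≤ 4 / ε ^ 2 := (one_le_div (by positivity)).2 (by nlinarith)
    have := one_add_mul_self_le_rpow_one_add (s := 1) (by norm_num) hone
    rw [one_add_one_eq_two] at this
    linarith
  calc (2 : ℝ) ^ (k * r) * (2 : ℝ) ^ (-(40 * (r : ℝ)) / ε ^ 2)
      = (2 : ℝ) ^ ((k * r : ℝ) + -(40 * (r : ℝ)) / ε ^ 2) := by
        rw [Real.rpow_add two_pos, ← Nat.cast_mul, Real.rpow_natCast]
    _ ≤ (2 : ℝ) ^ (-(4 / ε ^ 2)) := Real.rpow_le_rpow_of_exponent_le one_le_two hexponent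
    _ = ((2 : ℝ) ^ (4 / ε ^ 2))⁻¹ := Real.rpow_neg zero_le_two _
    _ < (4 / ε ^ 2)⁻¹ := inv_strictAnti₀ (by positivity) hbernoulli
    _ = ε ^ 2 / 4 := inv_div _ _
    _ ≤ ε / 4 := by gcongr; exact pow_le_of_le_one hε.le hε1.le two_ne_zero

lemma objective_bound_lt {r : ℕ} (hr : 1 ≤ r) {ε : ℝ} (hε : 0 < ε) (hε1 : ε < 1) :
    2 ^ (⌈2 / ε ^ 2⌉₊ * r) * (⌈2 / ε ^ 2⌉₊ * ε * (2 : ℝ) ^ (-(40 * (r : ℝ)) / ε ^ 2)) + 1 / 2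
      < ⌈2 / ε ^ 2⌉₊ * (ε ^ 2 / 2) := by
  set k := ⌈2 / ε ^ 2⌉₊
  have hk : 2 / ε ^ 2 ≤ k := Nat.le_ceil _
  have hk' : (k : ℝ) ≤ 3 / ε ^ 2 := by
    have hone : 1 ≤ 1 / ε ^ 2 := one_le_one_div (by positivity) (pow_le_one₀ hε.le hε1.le)
    calc (k : ℝ) ≤ 2 / ε ^ 2 + 1 := (Nat.ceil_lt_add_one (by positivity)).le
      _ ≤ 2 / ε ^ 2 + 1 / ε ^ 2 := by gcongr
      _ = 3 / ε ^ 2 := by ring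
  have hkε : 0 < k * ε := mul_pos ((by positivity : 0 < 2 / ε ^ 2).trans_le hk) hε
  have hmain := mul_lt_mul_of_pos_left (two_pow_mul_two_rpow_lt hr hε hε1 hk') hkε
  have hhalf : 2 ≤ k * ε ^ 2 := (div_le_iff₀ (by positivity)).1 hk
  linarith

lemma two_pow_le_two_rpow (r : ℕ) {ε : ℝ} {k : ℕ} (hk : k < ⌈2 / ε ^ 2⌉₊) :
    (2 : ℝ) ^ (k * r) ≤ (2 : ℝ) ^ (20 * (r : ℝ) / ε ^ 2) := by
  rw [← Real.rpow_natCast, Nat.cast_mul]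
  refine Real.rpow_le_rpow_of_exponent_le one_le_two ?_
  calc (k * r : ℝ) ≤ 2 / ε ^ 2 * r := by gcongr; exact (Nat.lt_ceil.1 hk).le
    _ ≤ 20 / ε ^ 2 * r := by gcongr; norm_num
    _ = 20 * r / ε ^ 2 := by ring

/-- **Sparse weak hypergraph regularity lemma.** For any `ε > 0` and any
`g : V_1 × ⋯ × V_r → ℝ≥0` which is upper `η`-regular with `η ≤ 2^{-40r/ε²}`, there
exists `g' : V_1 × ⋯ × V_r → [0,1]` of complexity at most `2^{20r/ε²}` such that
`(g, g')` is an `ε`-discrepancy pair. -/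
theorem sparse_weak_regularity (r : ℕ) (hr : 1 ≤ r) (ε : ℝ) (hε : 0 < ε)
    (V : Fin r → Type) [∀ j, Fintype (V j)] [∀ j, Nonempty (V j)]
    (g : ((j : Fin r) → V j) → ℝ) (hg : ∀ x, 0 ≤ g x)
    (η : ℝ) (hη : η ≤ (2 : ℝ) ^ (-(40 * (r : ℝ)) / ε ^ 2))
    (hreg : UpperRegular g η) :
    ∃ (g' : ((j : Fin r) → V j) → ℝ) (T : ℕ),
      (T : ℝ) ≤ (2 : ℝ) ^ (20 * (r : ℝ) / ε ^ 2) ∧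
      (∀ x, 0 ≤ g' x ∧ g' x ≤ 1) ∧
      FComplexityLE g' T ∧
      DiscPair g g' ε := by
  set η₀ := (2 : ℝ) ^ (-(40 * (r : ℝ)) / ε ^ 2)
  have hreg₀ : UpperRegular g η₀ := hreg.mono hη
  rcases le_or_gt 1 ε with hε1 | hε1
  · have hη₀ : η₀ ≤ 1 := Real.rpow_le_one_of_one_le_of_nonpos one_le_two
      (div_nonpos_of_nonpos_of_nonneg (neg_nonpos.2 (by positivity)) (sq_nonneg ε))
    refine ⟨fun _ => 1, 1, ?_, by simp, fComplexityLE_const 1,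
      fun B => (hreg₀.discPair_one hg B).trans ((max_eq_left hη₀).trans_le hε1)⟩
    exact_mod_cast Real.one_le_rpow one_le_two (by positivity)
  · rcases exists_discPair_or_le_dualObjective g hε.le ⌈2 / ε ^ 2⌉₊ with
      ⟨k, hk, c, B, hdisc⟩ | ⟨c, B, hc, hobj⟩
    · refine ⟨_, 2 ^ (k * r), ?_, fun x => unitClamp_mem_Icc _, ?_, hdisc⟩
      · exact_mod_cast two_pow_le_two_rpow r hk
      · simpa using fComplexityLE_comp_cliqueSum c B unitClamp
    · have hupper := hreg₀.dualObjective_cliqueSum_le hg (by positivity) hε.le hc B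
      rw [Fintype.card_fin] at hupper
      exact absurd (hobj.trans hupper) (objective_bound_lt hr hε hε1).not_ge
end

section
/- Let X be a finite set and 𝓕 a family of subsets of X satisfying the standing assumptions, and suppose 𝓕 is t-splittable for some t ≥ 2. Let 0 < ε, η < 1 and T := t^{20/ε²}. Then for any g : X → ℝ_{≥0} which is upper η-regular with η ≤ ε/(8tT), there exists g̃ : X → [0,1] with complexity at most T such that (g, g̃) is an ε-discrepancy pair. -/
/-!
The proof is an energy-increment argument. For a partition `P` of `X` into members of `F`, let `g_P`
be the conditional expectation of `g` on `P` and let `h_P = min 1 g_P`. By upper regularity on each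
part, truncating at `1` costs at most `|P| η` in mean.

If `(g, h_P)` is not an `ε`-discrepancy pair, witnessed by `A ∈ F`, let `P'` be the common
refinement of `P` with a partition into at most `t` members of `F` that has `A` as a part. The mean
of `h_{P'} - h_P` on `A` is then at least `ε - |P'| η` in absolute value, so `h_{P'} - h_P` has
large `L²` norm.

Truncation breaks the orthogonality of successive increments that makes `E[h_P²]` grow under
refinement. The energy used instead is `E[φ(g_P)]`, where `φ` is the convex function equal to `u²`
up to `1` and continued linearly, so that `φ'(u) = 2 min 1 u`. Since `g_{P'} - g_P` is orthogonal to
`φ'(g_P) = 2 h_P`, the energy grows by at least `E[(h_{P'} - h_P)²]` at each refinement, without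
loss, while the truncation bound keeps it below `1 + 2 |P| η`.
-/

open Finset

/-- `E[g·1_A]`, the average over `X` (with respect to the uniform measure) of `g`
restricted to `A`. -/
noncomputable def eavg {X : Type} [Fintype X] (g : X → ℝ) (A : Finset X) : ℝ :=
  (∑ x ∈ A, g x) / (Fintype.card X)

/-- `P` is a partition of `X` (into pairwise disjoint sets covering `X`). -/
def IsPartition {X : Type} [Fintype X] [DecidableEq X] (P : Finset (Finset X)) : Prop :=
  (∀ x : X, ∃ A ∈ P, x ∈ A) ∧ ∀ A ∈ P, ∀ B ∈ P, A ≠ B → Disjoint A B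

/-- The standing assumptions on the family `𝓕`: closed under intersection, contains
`X` and all singletons, and every member is a part of some partition of `X` into
members of `𝓕`. -/
def Standing {X : Type} [Fintype X] [DecidableEq X] (F : Finset (Finset X)) : Prop :=
  (∀ A ∈ F, ∀ B ∈ F, A ∩ B ∈ F) ∧
  Finset.univ ∈ F ∧
  (∀ x : X, {x} ∈ F) ∧
  (∀ S ∈ F, ∃ P : Finset (Finset X), IsPartition P ∧ (∀ A ∈ P, A ∈ F) ∧ S ∈ P)

/-- `𝓕` is `t`-splittable: every `S ∈ 𝓕` is a part of some partition of `X` into at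
most `t` members of `𝓕`. -/
def Splittable {X : Type} [Fintype X] [DecidableEq X] (F : Finset (Finset X))
    (t : ℕ) : Prop :=
  ∀ S ∈ F, ∃ P : Finset (Finset X),
    IsPartition P ∧ (∀ A ∈ P, A ∈ F) ∧ S ∈ P ∧ P.card ≤ t

/-- `g` is upper `η`-regular with respect to `𝓕`: `E[g·1_A] ≤ E[1_A] + η` for all
`A ∈ 𝓕`. -/
noncomputable def UpperReg {X : Type} [Fintype X] [DecidableEq X]
    (F : Finset (Finset X)) (g : X → ℝ) (η : ℝ) : Prop :=
  ∀ A ∈ F, eavg g A ≤ (A.card : ℝ) / (Fintype.card X) + η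

/-- `(g, g')` is an `ε`-discrepancy pair: `|E[(g - g')·1_A]| ≤ ε` for all `A ∈ 𝓕`. -/
noncomputable def Disc {X : Type} [Fintype X] [DecidableEq X]
    (F : Finset (Finset X)) (g g' : X → ℝ) (ε : ℝ) : Prop :=
  ∀ A ∈ F, |eavg (fun x => g x - g' x) A| ≤ ε

/-- `f` has complexity at most `T` (a real bound): there is a partition of `X` into at
most `T` members of `𝓕` on each of which `f` is constant. -/
def ComplexityLE {X : Type} [Fintype X] [DecidableEq X] (F : Finset (Finset X))
    (f : X → ℝ) (T : ℝ) : Prop :=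
  ∃ P : Finset (Finset X), IsPartition P ∧ (∀ A ∈ P, A ∈ F) ∧ (P.card : ℝ) ≤ T ∧
    ∀ A ∈ P, ∀ x ∈ A, ∀ y ∈ A, f x = f y

section EnergyIncrement

open scoped BigOperators FinsetFamily

variable {X : Type}

section Mean

variable [Fintype X]

lemma eavg_add (f g : X → ℝ) (A : Finset X) :
    eavg (fun x => f x + g x) A = eavg f A + eavg g A := by
  simp only [eavg, sum_add_distrib, add_div]

lemma eavg_sub (f g : X → ℝ) (A : Finset X) :
    eavg (fun x => f x - g x) A = eavg f A - eavg g A := by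
  simp only [eavg, sum_sub_distrib, sub_div]

lemma eavg_const_mul (c : ℝ) (f : X → ℝ) (A : Finset X) :
    eavg (fun x => c * f x) A = c * eavg f A := by
  simp only [eavg, ← mul_sum, mul_div_assoc]

lemma eavg_congr {f g : X → ℝ} {A : Finset X} (hfg : ∀ x ∈ A, f x = g x) :
    eavg f A = eavg g A := by
  rw [eavg, eavg, sum_congr rfl hfg]

lemma eavg_nonneg {f : X → ℝ} (hf : ∀ x, 0 ≤ f x) (A : Finset X) : 0 ≤ eavg f A :=
  div_nonneg (sum_nonneg fun x _ => hf x) (Nat.cast_nonneg _)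

lemma eavg_mono {f g : X → ℝ} (hfg : ∀ x, f x ≤ g x) (A : Finset X) : eavg f A ≤ eavg g A :=
  div_le_div_of_nonneg_right (sum_le_sum fun x _ => hfg x) (Nat.cast_nonneg _)

lemma eavg_le_eavg_univ {f : X → ℝ} (hf : ∀ x, 0 ≤ f x) (A : Finset X) :
    eavg f A ≤ eavg f univ :=
  div_le_div_of_nonneg_right (sum_le_univ_sum_of_nonneg hf) (Nat.cast_nonneg _)

lemma eavg_one (A : Finset X) : eavg (fun _ => 1) A = (#A : ℝ) / Fintype.card X := by
  simp only [eavg, sum_const, nsmul_eq_mul, mul_one]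

lemma eavg_one_le_one (A : Finset X) : eavg (fun _ => 1) A ≤ 1 := by
  rw [eavg_one]
  exact div_le_one_of_le₀ (mod_cast card_le_univ A) (Nat.cast_nonneg _)

lemma sq_eavg_le (f : X → ℝ) (A : Finset X) : eavg f A ^ 2 ≤ eavg (fun x => f x ^ 2) univ :=
  calc eavg f A ^ 2 ≤ #A * (∑ x ∈ A, f x ^ 2) / (Fintype.card X : ℝ) ^ 2 := by
        rw [eavg, div_pow]
        gcongr
        exact sq_sum_le_card_mul_sum_sq
    _ = eavg (fun _ => 1) A * eavg (fun x => f x ^ 2) A := by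
        rw [eavg_one, eavg, sq (Fintype.card X : ℝ), mul_div_mul_comm]
    _ ≤ eavg (fun x => f x ^ 2) A :=
        mul_le_of_le_one_left (eavg_nonneg (fun x => sq_nonneg _) A) (eavg_one_le_one A)
    _ ≤ eavg (fun x => f x ^ 2) univ := eavg_le_eavg_univ (fun x => sq_nonneg _) A

end Mean

section Partition

/-- `f` is constant on each part of `P`, i.e. measurable with respect to the partition `P`. -/
def ConstOnParts {α : Type*} (P : Finset (Finset X)) (f : X → α) : Prop :=
  ∀ B ∈ P, ∀ x ∈ B, ∀ y ∈ B, f x = f y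

lemma ConstOnParts.comp {α β : Type*} {P : Finset (Finset X)} {f : X → α}
    (hf : ConstOnParts P f) (φ : α → β) : ConstOnParts P fun x => φ (f x) :=
  fun B hB x hx y hy => congrArg φ (hf B hB x hx y hy)

variable [DecidableEq X] {P Q : Finset (Finset X)}

lemma ConstOnParts.infs_left {α : Type*} {f : X → α} (hf : ConstOnParts P f)
    (Q : Finset (Finset X)) : ConstOnParts (P ⊼ Q) f :=
  forall_infs_iff.2 fun B hB _ _ x hx y hy =>
    hf B hB x (mem_of_mem_inter_left hx) y (mem_of_mem_inter_left hy)

lemma ConstOnParts.infs_right {α : Type*} {f : X → α} (hf : ConstOnParts Q f)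
    (P : Finset (Finset X)) : ConstOnParts (P ⊼ Q) f :=
  infs_comm Q P ▸ hf.infs_left P

variable [Fintype X]

namespace IsPartition

lemma eq_of_mem (hP : IsPartition P) {B C : Finset X} (hB : B ∈ P) (hC : C ∈ P) {x : X}
    (hxB : x ∈ B) (hxC : x ∈ C) : B = C := by
  by_contra hne
  exact disjoint_left.1 (hP.2 B hB C hC hne) hxB hxC

lemma singleton_univ : IsPartition ({univ} : Finset (Finset X)) :=
  ⟨fun x => ⟨univ, mem_singleton_self _, mem_univ x⟩, fun _ hA _ hB hne =>
    absurd ((mem_singleton.1 hA).trans (mem_singleton.1 hB).symm) hne⟩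

lemma infs (hP : IsPartition P) (hQ : IsPartition Q) : IsPartition (P ⊼ Q) := by
  refine ⟨fun x => ?_, forall_infs_iff.2 fun B hB C hC => forall_infs_iff.2 fun B' hB' C' hC' => ?_⟩
  · obtain ⟨B, hB, hxB⟩ := hP.1 x
    obtain ⟨C, hC, hxC⟩ := hQ.1 x
    exact ⟨B ⊓ C, inf_mem_infs hB hC, mem_inter.2 ⟨hxB, hxC⟩⟩
  · refine fun hne => disjoint_left.2 fun x hx hx' => hne ?_
    rw [inf_eq_inter, mem_inter] at hx hx'
    rw [hP.eq_of_mem hB hB' hx.1 hx'.1, hQ.eq_of_mem hC hC' hx.2 hx'.2]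

lemma constOnParts_mem (hP : IsPartition P) {A : Finset X} (hA : A ∈ P) :
    ConstOnParts P (· ∈ A) := by
  have mem_of_mem {B : Finset X} (hB : B ∈ P) {x y : X} (hx : x ∈ B) (hy : y ∈ B) (hxA : x ∈ A) :
      y ∈ A := hP.eq_of_mem hB hA hx hxA ▸ hy
  exact fun B hB x hx y hy => propext ⟨mem_of_mem hB hx hy, mem_of_mem hB hy hx⟩

lemma sum_eavg (hP : IsPartition P) (f : X → ℝ) : ∑ B ∈ P, eavg f B = eavg f univ := by
  have cover : P.biUnion (fun B => B) = univ := by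
    ext x
    simpa only [mem_biUnion, mem_univ, iff_true] using hP.1 x
  simp only [eavg]
  rw [← sum_div, ← cover, sum_biUnion hP.2]

end IsPartition

end Partition

section CondAvg

/-- The conditional expectation of `g` on the partition `P`: its value on a part `B ∈ P` is the
average of `g` over `B`. -/
noncomputable def condAvg (P : Finset (Finset X)) (g : X → ℝ) (x : X) : ℝ :=
  ∑ B ∈ P, (B : Set X).indicator (fun _ => 𝔼 y ∈ B, g y) x

/-- The conditional expectation of `g` on `P`, truncated at `1`: the bounded approximation of `g`
attached to `P`. -/
noncomputable def truncCondAvg (P : Finset (Finset X)) (g : X → ℝ) (x : X) : ℝ :=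
  min 1 (condAvg P g x)

lemma condAvg_nonneg (P : Finset (Finset X)) {g : X → ℝ} (hg : ∀ x, 0 ≤ g x) (x : X) :
    0 ≤ condAvg P g x :=
  sum_nonneg fun _ _ => Set.indicator_nonneg (fun _ _ => expect_nonneg fun y _ => hg y) x

lemma truncCondAvg_nonneg (P : Finset (Finset X)) {g : X → ℝ} (hg : ∀ x, 0 ≤ g x) (x : X) :
    0 ≤ truncCondAvg P g x :=
  le_min zero_le_one (condAvg_nonneg P hg x)

lemma truncCondAvg_le_one (P : Finset (Finset X)) (g : X → ℝ) (x : X) : truncCondAvg P g x ≤ 1 :=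
  min_le_left _ _

lemma truncCondAvg_le_condAvg (P : Finset (Finset X)) (g : X → ℝ) (x : X) :
    truncCondAvg P g x ≤ condAvg P g x :=
  min_le_right _ _

variable [Fintype X] [DecidableEq X] {F P : Finset (Finset X)} {g : X → ℝ} {η : ℝ}

namespace IsPartition

lemma condAvg_eq_expect (hP : IsPartition P) (g : X → ℝ) {B : Finset X} (hB : B ∈ P) {x : X}
    (hx : x ∈ B) : condAvg P g x = 𝔼 y ∈ B, g y := by
  rw [condAvg, sum_eq_single_of_mem B hB, Set.indicator_of_mem (mem_coe.2 hx)]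
  exact fun C hC hCB => Set.indicator_of_notMem (fun hxC => hCB (hP.eq_of_mem hC hB hxC hx)) _

lemma constOnParts_condAvg (hP : IsPartition P) (g : X → ℝ) : ConstOnParts P (condAvg P g) :=
  fun B hB x hx y hy => by rw [hP.condAvg_eq_expect g hB hx, hP.condAvg_eq_expect g hB hy]

lemma constOnParts_truncCondAvg (hP : IsPartition P) (g : X → ℝ) :
    ConstOnParts P (truncCondAvg P g) :=
  (hP.constOnParts_condAvg g).comp (min 1)

lemma eavg_condAvg_part (hP : IsPartition P) (g : X → ℝ) {B : Finset X} (hB : B ∈ P) :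
    eavg (condAvg P g) B = eavg g B := by
  rw [eavg_congr fun x hx => hP.condAvg_eq_expect g hB hx, eavg, sum_const, card_smul_expect, eavg]

lemma eavg_condAvg_mul (hP : IsPartition P) (g : X → ℝ) {w : X → ℝ} (hw : ConstOnParts P w) :
    eavg (fun x => w x * condAvg P g x) univ = eavg (fun x => w x * g x) univ := by
  rw [← hP.sum_eavg, ← hP.sum_eavg]
  refine sum_congr rfl fun B hB => ?_
  rcases B.eq_empty_or_nonempty with rfl | ⟨z, hz⟩
  · simp only [eavg, sum_empty]
  · have eavg_mul (f : X → ℝ) : eavg (fun x => w x * f x) B = w z * eavg f B := by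
      rw [← eavg_const_mul]
      exact eavg_congr fun x hx => by rw [hw B hB x hx z hz]
    rw [eavg_mul, eavg_mul, hP.eavg_condAvg_part g hB]

lemma eavg_condAvg_of_constOnParts_mem (hP : IsPartition P) (g : X → ℝ) {A : Finset X}
    (hA : ConstOnParts P (· ∈ A)) : eavg (condAvg P g) A = eavg g A := by
  have const_indicator : ConstOnParts P fun x => if x ∈ A then (1 : ℝ) else 0 :=
    fun B hB x hx y hy => if_congr (iff_of_eq (hA B hB x hx y hy)) rfl rfl
  have eavg_eq (f : X → ℝ) : eavg (fun x => (if x ∈ A then 1 else 0) * f x) univ = eavg f A := by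
    simp only [eavg, ite_mul, one_mul, zero_mul, sum_ite_mem, univ_inter]
  rw [← eavg_eq, ← eavg_eq, hP.eavg_condAvg_mul g const_indicator]

lemma eavg_condAvg_sub_truncCondAvg_part_le (hP : IsPartition P) (hη : 0 ≤ η)
    (hreg : UpperReg F g η) {B : Finset X} (hBP : B ∈ P) (hBF : B ∈ F) :
    eavg (fun x => condAvg P g x - truncCondAvg P g x) B ≤ η := by
  rcases le_total (𝔼 y ∈ B, g y) 1 with hle | hge
  · have loss_eq_zero : ∀ x ∈ B, condAvg P g x - truncCondAvg P g x = 0 := fun x hx => by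
      rw [truncCondAvg, hP.condAvg_eq_expect g hBP hx, min_eq_right hle, sub_self]
    rw [eavg_congr loss_eq_zero, eavg, sum_const_zero, zero_div]
    exact hη
  · have trunc_eq_one : ∀ x ∈ B, truncCondAvg P g x = 1 := fun x hx => by
      rw [truncCondAvg, hP.condAvg_eq_expect g hBP hx, min_eq_left hge]
    rw [eavg_sub, hP.eavg_condAvg_part g hBP, eavg_congr trunc_eq_one, eavg_one]
    exact sub_le_iff_le_add'.2 (hreg B hBF)

lemma eavg_condAvg_sub_truncCondAvg_le (hP : IsPartition P) (hPF : P ⊆ F) (hη : 0 ≤ η)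
    (hreg : UpperReg F g η) :
    eavg (fun x => condAvg P g x - truncCondAvg P g x) univ ≤ #P * η := by
  rw [← hP.sum_eavg, ← nsmul_eq_mul]
  exact sum_le_card_nsmul _ _ _ fun B hB =>
    hP.eavg_condAvg_sub_truncCondAvg_part_le hη hreg hB (hPF hB)

lemma abs_eavg_sub_le (hP : IsPartition P) (hPF : P ⊆ F) (hη : 0 ≤ η) (hreg : UpperReg F g η)
    {A : Finset X} (hA : ConstOnParts P (· ∈ A)) (h : X → ℝ) :
    |eavg (fun x => g x - h x) A| ≤ |eavg (fun x => truncCondAvg P g x - h x) A| + #P * η := by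
  have loss_nonneg (x : X) : 0 ≤ condAvg P g x - truncCondAvg P g x :=
    sub_nonneg.2 (truncCondAvg_le_condAvg P g x)
  have abs_loss_le : |eavg (fun x => condAvg P g x - truncCondAvg P g x) A| ≤ #P * η := by
    rw [abs_of_nonneg (eavg_nonneg loss_nonneg A)]
    exact (eavg_le_eavg_univ loss_nonneg A).trans
      (hP.eavg_condAvg_sub_truncCondAvg_le hPF hη hreg)
  have split : eavg (fun x => g x - h x) A = eavg (fun x => truncCondAvg P g x - h x) A
      + eavg (fun x => condAvg P g x - truncCondAvg P g x) A := by
    simp only [eavg_sub, hP.eavg_condAvg_of_constOnParts_mem g hA]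
    ring
  rw [split]
  exact (abs_add_le _ _).trans (by gcongr)

end IsPartition

end CondAvg

section Energy

/-- The one-sided Huber function: `u ^ 2` for `u ≤ 1`, continued by its tangent `2 * u - 1` for
`u ≥ 1`. It is convex with derivative `2 * min 1 u`. -/
noncomputable def huber (u : ℝ) : ℝ := min 1 u ^ 2 + 2 * (u - min 1 u)

lemma huber_nonneg (u : ℝ) : 0 ≤ huber u :=
  add_nonneg (sq_nonneg _) (mul_nonneg zero_le_two (sub_nonneg.2 (min_le_right _ _)))

lemma huber_le {u : ℝ} (hu : 0 ≤ u) : huber u ≤ 1 + 2 * (u - min 1 u) :=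
  add_le_add_left (pow_le_one₀ (le_min zero_le_one hu) (min_le_left _ _)) _

lemma huber_add_sq_add_le (u v : ℝ) :
    huber u + (min 1 v - min 1 u) ^ 2 + 2 * (min 1 u * (v - u)) ≤ huber v := by
  have complementary : (1 - min 1 u) * (u - min 1 u) = 0 := by
    rcases min_choice 1 u with h | h <;> simp only [h, sub_self, zero_mul, mul_zero]
  have cross_nonneg : 0 ≤ (1 - min 1 u) * (v - min 1 v) :=
    mul_nonneg (sub_nonneg.2 (min_le_left _ _)) (sub_nonneg.2 (min_le_right _ _))
  unfold huber
  linarith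

variable [Fintype X]

/-- The energy of the partition `P`, whose growth under refinement controls the `L²` distance of
the truncated conditional expectations. -/
noncomputable def energy (P : Finset (Finset X)) (g : X → ℝ) : ℝ :=
  eavg (fun x => huber (condAvg P g x)) univ

lemma energy_nonneg (P : Finset (Finset X)) (g : X → ℝ) : 0 ≤ energy P g :=
  eavg_nonneg (fun _ => huber_nonneg _) univ

variable [DecidableEq X] {F P Q : Finset (Finset X)} {g : X → ℝ} {t : ℕ} {ε η δ : ℝ}

lemma IsPartition.energy_le (hP : IsPartition P) (hPF : P ⊆ F) (hη : 0 ≤ η)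
    (hg : ∀ x, 0 ≤ g x) (hreg : UpperReg F g η) : energy P g ≤ 1 + 2 * (#P * η) :=
  calc energy P g
      ≤ eavg (fun x => 1 + 2 * (condAvg P g x - truncCondAvg P g x)) univ :=
        eavg_mono (fun x => huber_le (condAvg_nonneg P hg x)) univ
    _ = eavg (fun _ => 1) univ
          + 2 * eavg (fun x => condAvg P g x - truncCondAvg P g x) univ := by
        rw [eavg_add, eavg_const_mul]
    _ ≤ 1 + 2 * (#P * η) := by
        gcongr
        · exact eavg_one_le_one univ
        · exact hP.eavg_condAvg_sub_truncCondAvg_le hPF hη hreg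

lemma IsPartition.energy_add_le (hP : IsPartition P) (hQ : IsPartition Q)
    (hPQ : ConstOnParts Q (truncCondAvg P g)) :
    energy P g + eavg (fun x => (truncCondAvg Q g x - truncCondAvg P g x) ^ 2) univ
      ≤ energy Q g := by
  have orthogonal :
      eavg (fun x => truncCondAvg P g x * (condAvg Q g x - condAvg P g x)) univ = 0 := by
    simp only [mul_sub]
    rw [eavg_sub, hQ.eavg_condAvg_mul g hPQ,
      hP.eavg_condAvg_mul g (hP.constOnParts_truncCondAvg g), sub_self]
  calc energy P g + eavg (fun x => (truncCondAvg Q g x - truncCondAvg P g x) ^ 2) univ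
      = eavg (fun x => huber (condAvg P g x) + (truncCondAvg Q g x - truncCondAvg P g x) ^ 2
          + 2 * (truncCondAvg P g x * (condAvg Q g x - condAvg P g x))) univ := by
        rw [eavg_add, eavg_add, eavg_const_mul, orthogonal, mul_zero, add_zero, energy]
    _ ≤ energy Q g := eavg_mono (fun x => huber_add_sq_add_le _ _) univ

lemma exists_energy_increment (hF : InfClosed (F : Set (Finset X))) (hsp : Splittable F t)
    (hη : 0 ≤ η) (hreg : UpperReg F g η) (hP : IsPartition P) (hPF : P ⊆ F)
    (hδ : (#P * t : ℕ) * η ≤ δ) (hδε : δ ≤ ε) (hdisc : ¬ Disc F g (truncCondAvg P g) ε) :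
    ∃ Q, IsPartition Q ∧ Q ⊆ F ∧ #Q ≤ #P * t ∧ energy P g + (ε - δ) ^ 2 ≤ energy Q g := by
  obtain ⟨A, hAF, hA⟩ : ∃ A ∈ F, ε < |eavg (fun x => g x - truncCondAvg P g x) A| := by
    simpa only [Disc, not_forall, not_le, exists_prop] using hdisc
  obtain ⟨S, hS, hSF, hAS, hSt⟩ := hsp A hAF
  have hQ := hP.infs hS
  have hQF : P ⊼ S ⊆ F := infs_subset_iff.2 fun B hB C hC => hF (hPF hB) (hSF C hC)
  have hQt : #(P ⊼ S) ≤ #P * t := (card_infs_le P S).trans (Nat.mul_le_mul_left _ hSt)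
  have loss_le : #(P ⊼ S) * η ≤ δ := le_trans (by gcongr) hδ
  have jump : ε - δ ≤ |eavg (fun x => truncCondAvg (P ⊼ S) g x - truncCondAvg P g x) A| := by
    have := hQ.abs_eavg_sub_le hQF hη hreg ((hS.constOnParts_mem hAS).infs_right P)
      (truncCondAvg P g)
    linarith
  refine ⟨P ⊼ S, hQ, hQF, hQt, ?_⟩
  calc energy P g + (ε - δ) ^ 2
      ≤ energy P g + eavg (fun x => truncCondAvg (P ⊼ S) g x - truncCondAvg P g x) A ^ 2 := by
        rw [← sq_abs (eavg _ _)]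
        gcongr
    _ ≤ energy P g
          + eavg (fun x => (truncCondAvg (P ⊼ S) g x - truncCondAvg P g x) ^ 2) univ := by
        gcongr
        exact sq_eavg_le _ A
    _ ≤ energy (P ⊼ S) g := hP.energy_add_le hQ ((hP.constOnParts_truncCondAvg g).infs_left S)

lemma Splittable.one_le (hsp : Splittable F t) (huniv : univ ∈ F) : 1 ≤ t := by
  obtain ⟨P, -, -, hmem, hcard⟩ := hsp univ huniv
  exact (card_pos.2 ⟨univ, hmem⟩).trans_le hcard

lemma exists_disc_or_le_energy (hF : InfClosed (F : Set (Finset X))) (huniv : univ ∈ F)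
    (hsp : Splittable F t) (hη : 0 ≤ η) (hreg : UpperReg F g η) (hδε : δ ≤ ε) {n : ℕ}
    (hδ : (t ^ n : ℕ) * η ≤ δ) :
    ∃ P, IsPartition P ∧ P ⊆ F ∧ #P ≤ t ^ n ∧
      (Disc F g (truncCondAvg P g) ε ∨ n * (ε - δ) ^ 2 ≤ energy P g) := by
  induction n with
  | zero =>
    refine ⟨{univ}, .singleton_univ, singleton_subset_iff.2 huniv, (card_singleton _).le, .inr ?_⟩
    simpa only [Nat.cast_zero, zero_mul] using energy_nonneg {univ} g
  | succ n ih =>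
    have pow_le : t ^ n ≤ t ^ (n + 1) :=
      Nat.pow_le_pow_right (hsp.one_le huniv) n.le_succ
    obtain ⟨P, hP, hPF, hPn, hdisc_or⟩ := ih (le_trans (by gcongr) hδ)
    by_cases hdisc : Disc F g (truncCondAvg P g) ε
    · exact ⟨P, hP, hPF, hPn.trans pow_le, .inl hdisc⟩
    have hPt : #P * t ≤ t ^ (n + 1) := pow_succ t n ▸ Nat.mul_le_mul_right t hPn
    obtain ⟨Q, hQ, hQF, hQcard, henergy⟩ :=
      exists_energy_increment hF hsp hη hreg hP hPF (le_trans (by gcongr) hδ) hδε hdisc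
    refine ⟨Q, hQ, hQF, hQcard.trans hPt, .inr ?_⟩
    have energy_ge := hdisc_or.resolve_left hdisc
    push_cast
    linarith

theorem exists_disc_truncCondAvg (hF : InfClosed (F : Set (Finset X))) (huniv : univ ∈ F)
    (hsp : Splittable F t) (hη : 0 ≤ η) (hg : ∀ x, 0 ≤ g x) (hreg : UpperReg F g η)
    (hδε : δ ≤ ε) {n : ℕ} (hδ : (t ^ n : ℕ) * η ≤ δ) (hn : 1 + 2 * δ < n * (ε - δ) ^ 2) :
    ∃ P, IsPartition P ∧ P ⊆ F ∧ #P ≤ t ^ n ∧ Disc F g (truncCondAvg P g) ε := by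
  obtain ⟨P, hP, hPF, hPn, hdisc | henergy⟩ :=
    exists_disc_or_le_energy hF huniv hsp hη hreg hδε hδ
  · exact ⟨P, hP, hPF, hPn, hdisc⟩
  · have energy_le := hP.energy_le hPF hη hg hreg
    have loss_le : #P * η ≤ δ := le_trans (by gcongr) hδ
    linarith

end Energy

end EnergyIncrement

lemma one_add_lt_floor_mul_sq {ε : ℝ} (hε0 : 0 < ε) (hε1 : ε ≤ 1) :
    1 + 2 * (ε / 8) < ⌊3 / ε ^ 2⌋₊ * (ε - ε / 8) ^ 2 := by
  have floor_mul_gt : 3 < (⌊3 / ε ^ 2⌋₊ + 1) * ε ^ 2 :=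
    (div_lt_iff₀ (by positivity)).1 (Nat.lt_floor_add_one _)
  have sq_le_one : ε ^ 2 ≤ 1 := pow_le_one₀ hε0.le hε1
  linarith

theorem abstract_weak_regularity_general {X : Type} [Fintype X] [DecidableEq X] [Nonempty X]
    {F : Finset (Finset X)} (hF : InfClosed (F : Set (Finset X))) (huniv : univ ∈ F)
    {t : ℕ} (hsp : Splittable F t) {ε η T : ℝ} (hε0 : 0 < ε) (hε1 : ε ≤ 1) (hη : 0 ≤ η)
    (hT : (t : ℝ) ^ (3 / ε ^ 2) ≤ T) (hηT : η ≤ ε / (8 * T))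
    {g : X → ℝ} (hg : ∀ x, 0 ≤ g x) (hreg : UpperReg F g η) :
    ∃ g' : X → ℝ, (∀ x, 0 ≤ g' x ∧ g' x ≤ 1) ∧ ComplexityLE F g' T ∧ Disc F g g' ε := by
  have one_le_t : (1 : ℝ) ≤ t := mod_cast hsp.one_le huniv
  have pow_le : ((t ^ ⌊3 / ε ^ 2⌋₊ : ℕ) : ℝ) ≤ T := by
    rw [Nat.cast_pow, ← Real.rpow_natCast]
    exact (Real.rpow_le_rpow_of_exponent_le one_le_t (Nat.floor_le (by positivity))).trans hT
  have T_pos : 0 < T := (Real.rpow_pos_of_pos (by linarith) _).trans_le hT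
  have loss_le : (t ^ ⌊3 / ε ^ 2⌋₊ : ℕ) * η ≤ ε / 8 :=
    calc (t ^ ⌊3 / ε ^ 2⌋₊ : ℕ) * η ≤ T * (ε / (8 * T)) := by gcongr
      _ = ε / 8 := by field_simp
  obtain ⟨P, hP, hPF, hPcard, hdisc⟩ := exists_disc_truncCondAvg hF huniv hsp hη hg hreg
    (by linarith) loss_le (one_add_lt_floor_mul_sq hε0 hε1)
  exact ⟨truncCondAvg P g, fun x => ⟨truncCondAvg_nonneg P hg x, truncCondAvg_le_one P g x⟩,
    ⟨P, hP, hPF, (Nat.cast_le.2 hPcard).trans pow_le, hP.constOnParts_truncCondAvg g⟩, hdisc⟩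

/-- **Abstract weak regularity lemma.** Let `𝓕` be a `t`-splittable family satisfying
the standing assumptions, `0 < ε, η < 1`, `T := t^{20/ε²}`, and `η ≤ ε/(8tT)`. Then for
any upper `η`-regular `g : X → ℝ≥0` there is `g' : X → [0,1]` with complexity at most
`T` such that `(g, g')` is an `ε`-discrepancy pair. -/
theorem abstract_weak_regularity (X : Type) [Fintype X] [DecidableEq X] [Nonempty X]
    (F : Finset (Finset X)) (hF : Standing F)
    (t : ℕ) (ht : 2 ≤ t) (hsp : Splittable F t)
    (ε η : ℝ) (hε0 : 0 < ε) (hε1 : ε < 1) (hη0 : 0 < η) (hη1 : η < 1)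
    (hηbd : η ≤ ε / (8 * (t : ℝ) * (t : ℝ) ^ (20 / ε ^ 2)))
    (g : X → ℝ) (hg : ∀ x, 0 ≤ g x) (hreg : UpperReg F g η) :
    ∃ g' : X → ℝ, (∀ x, 0 ≤ g' x ∧ g' x ≤ 1) ∧
      ComplexityLE F g' ((t : ℝ) ^ (20 / ε ^ 2)) ∧ Disc F g g' ε := by
  have one_le_t : (1 : ℝ) ≤ t := mod_cast one_le_two.trans ht
  have hT : (t : ℝ) ^ (3 / ε ^ 2) ≤ (t : ℝ) ^ (20 / ε ^ 2) :=
    Real.rpow_le_rpow_of_exponent_le one_le_t (by gcongr; norm_num)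
  have hηT : η ≤ ε / (8 * (t : ℝ) ^ (20 / ε ^ 2)) :=
    hηbd.trans (by gcongr; linarith)
  exact abstract_weak_regularity_general (fun A hA B hB => hF.1 A hA B hB) hF.2.1 hsp hε0 hε1.le
    hη0.le hT hηT hg hreg
end
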